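/- Let 𝒮 be the 8-dimensional complex Lie superalgebra of the classical operators of Kähler geometry: even basis Δ, L, H, Λ and odd basis d, d*, d_c, d_c*, with the only nonzero brackets [L,Λ] = H, [H,L] = 2L, [H,Λ] = −2Λ, [d,d*] = Δ, [d_c,d_c*] = Δ (odd brackets are anticommutators), [H,d] = d, [H,d*] = −d*, [H,d_c] = d_c, [H,d_c*] = −d_c*, [L,d*] = −d_c, [L,d_c*] = d, [Λ,d] = d_c*, [Λ,d_c] = −d* (Δ is central). Then the degree-zero part S'(2,0)_{deg=0} of S'(2,0) with respect to the ℤ-grading deg is spanned by ℒ_0, E_{−1}, H_0, F_1, 𝔥_0, 𝔭_0, 𝔵_{−1}, 𝔶_1, and the linear map ψ : 𝒮 → S'(2,0)_{deg=0} defined by ψ(Δ) = −ℒ_0 + (1/2)H_0, ψ(L) = E_{−1}, ψ(H) = H_0, ψ(Λ) = F_1, ψ(d) = 𝔥_0, ψ(d*) = −𝔭_0, ψ(d_c) = 𝔵_{−1}, ψ(d_c*) = 𝔶_1 is an isomorphism of Lie superalgebras. -/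

import Mathlib

noncomputable section

/-- The Laurent polynomial ring `ℂ[t,t⁻¹]`, as the space of finitely supported
functions `ℤ →₀ ℂ` (the function `f` represents `Σ_n f(n)tⁿ`). -/
abbrev Lau : Type := ℤ →₀ ℂ

/-- The supercommutative superalgebra `A = ℂ[t,t⁻¹] ⊗ Λ(θ₁,θ₂)`, an element
`(a,b,c,d)` representing `a + bθ₁ + cθ₂ + dθ₁θ₂`. -/
abbrev GA : Type := Lau × Lau × Lau × Lau

/-- The derivative `∂_t` on `ℂ[t,t⁻¹]`: `tⁿ ↦ n tⁿ⁻¹`. -/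
def tder : Lau →ₗ[ℂ] Lau :=
  Finsupp.lsum ℂ fun n => (n : ℂ) • Finsupp.lsingle (n - 1)

/-- Multiplication by `t^k` on `ℂ[t,t⁻¹]`. -/
def tshift (k : ℤ) : Lau →ₗ[ℂ] Lau := Finsupp.lmapDomain ℂ ℂ (· + k)

/-- Components of `A`. -/
def pr0 : GA →ₗ[ℂ] Lau := LinearMap.fst ℂ Lau (Lau × Lau × Lau)
def pr1 : GA →ₗ[ℂ] Lau :=
  (LinearMap.fst ℂ Lau (Lau × Lau)).comp (LinearMap.snd ℂ Lau (Lau × Lau × Lau))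
def pr2 : GA →ₗ[ℂ] Lau :=
  ((LinearMap.fst ℂ Lau Lau).comp (LinearMap.snd ℂ Lau (Lau × Lau))).comp
    (LinearMap.snd ℂ Lau (Lau × Lau × Lau))
def pr3 : GA →ₗ[ℂ] Lau :=
  ((LinearMap.snd ℂ Lau Lau).comp (LinearMap.snd ℂ Lau (Lau × Lau))).comp
    (LinearMap.snd ℂ Lau (Lau × Lau × Lau))

/-- Build an endomorphism of `A` from its four components. -/
def mk4 (f0 f1 f2 f3 : GA →ₗ[ℂ] Lau) : Module.End ℂ GA :=
  f0.prod (f1.prod (f2.prod f3))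

/-- The even derivation `∂_t` of `A`. -/
def Dt : Module.End ℂ GA :=
  mk4 (tder.comp pr0) (tder.comp pr1) (tder.comp pr2) (tder.comp pr3)

/-- The odd (left) derivation `∂₁ = ∂/∂θ₁` of `A`. -/
def Dθ1 : Module.End ℂ GA := mk4 pr1 0 pr3 0

/-- The odd (left) derivation `∂₂ = ∂/∂θ₂` of `A`. -/
def Dθ2 : Module.End ℂ GA := mk4 pr2 (-pr3) 0 0

/-- Multiplication by `θ₁` on `A`. -/
def Mθ1 : Module.End ℂ GA := mk4 0 pr0 0 pr2

/-- Multiplication by `θ₂` on `A`. -/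
def Mθ2 : Module.End ℂ GA := mk4 0 0 pr0 (-pr1)

/-- Multiplication by `t^k` on `A`. -/
def Mt (k : ℤ) : Module.End ℂ GA :=
  mk4 ((tshift k).comp pr0) ((tshift k).comp pr1) ((tshift k).comp pr2) ((tshift k).comp pr3)

/-- `ℒ_n^α = −tⁿ(t∂_t + (1/2)(n+α+1)(θ₁∂₁ + θ₂∂₂))`. -/
def Lop (α : ℂ) (n : ℤ) : Module.End ℂ GA :=
  -(Mt (n + 1) * Dt + (((n : ℂ) + α + 1) / 2) • (Mt n * (Mθ1 * Dθ1 + Mθ2 * Dθ2)))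

/-- `E_n = tⁿθ₂∂₁`. -/
def Eop (n : ℤ) : Module.End ℂ GA := Mt n * Mθ2 * Dθ1

/-- `H_n = tⁿ(θ₂∂₂ − θ₁∂₁)`. -/
def Hop (n : ℤ) : Module.End ℂ GA := Mt n * Mθ2 * Dθ2 - Mt n * Mθ1 * Dθ1

/-- `F_n = tⁿθ₁∂₂`. -/
def Fop (n : ℤ) : Module.End ℂ GA := Mt n * Mθ1 * Dθ2

/-- `𝔥_n^α = tⁿθ₂∂_t − (n+α)tⁿ⁻¹θ₁θ₂∂₁`. -/
def hop (α : ℂ) (n : ℤ) : Module.End ℂ GA :=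
  Mt n * Mθ2 * Dt - ((n : ℂ) + α) • (Mt (n - 1) * Mθ1 * Mθ2 * Dθ1)

/-- `𝔭_n = −tⁿ⁺¹∂₂`. -/
def pop (n : ℤ) : Module.End ℂ GA := -(Mt (n + 1) * Dθ2)

/-- `𝔵_n = tⁿ⁺¹∂₁`. -/
def xop (n : ℤ) : Module.End ℂ GA := Mt (n + 1) * Dθ1

/-- `𝔶_n^α = tⁿθ₁∂_t + (n+α)tⁿ⁻¹θ₁θ₂∂₂`. -/
def yop (α : ℂ) (n : ℤ) : Module.End ℂ GA :=
  Mt n * Mθ1 * Dt + ((n : ℂ) + α) • (Mt (n - 1) * Mθ1 * Mθ2 * Dθ2)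

/-- The parity involution of `A = ℂ[t,t⁻¹] ⊗ Λ(θ₁,θ₂)` (identity on the even part,
`−1` on the odd part). -/
def sigmaGA : Module.End ℂ GA := mk4 pr0 (-pr1) (-pr2) pr3

/-- The supercommutator on `End(A)`, extended bilinearly from homogeneous elements
(for homogeneous `x, y` it equals `x∘y − (−1)^{p(x)p(y)} y∘x`, parity being measured
by conjugation by the parity involution). -/
def sbr (x y : Module.End ℂ GA) : Module.End ℂ GA :=
  x * y - ((1 : ℂ) / 2) • ((y + sigmaGA * y * sigmaGA) * x)
    - ((1 : ℂ) / 2) • ((y - sigmaGA * y * sigmaGA) * (sigmaGA * x * sigmaGA))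

/-- The generating set of the superalgebra `S'(2,α) ⊆ W(2)`: all the basis
elements `ℒ_n^α, E_n, H_n, F_n, 𝔥_n^α, 𝔭_n, 𝔵_n, 𝔶_n^α`. -/
def s2Gen (α : ℂ) : Set (Module.End ℂ GA) :=
  {e | ∃ n : ℤ, e = Lop α n ∨ e = Eop n ∨ e = Hop n ∨ e = Fop n ∨
    e = hop α n ∨ e = pop n ∨ e = xop n ∨ e = yop α n}

/-- The superalgebra `S'(2,α)`, as the span of its basis inside `W(2) ⊆ End(A)`. -/
def s2Span (α : ℂ) : Submodule ℂ (Module.End ℂ GA) := Submodule.span ℂ (s2Gen α)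

/-- `D` is an even derivation of `S'(2,α)`: it preserves parity and satisfies the
Leibniz rule `D[x,y] = [Dx,y] + [x,Dy]`. -/
def IsEvenDer (α : ℂ) (D : ↥(s2Span α) →ₗ[ℂ] ↥(s2Span α)) : Prop :=
  (∀ x z : ↥(s2Span α), (z : Module.End ℂ GA) = sigmaGA * (x : Module.End ℂ GA) * sigmaGA →
    ((D z : Module.End ℂ GA)) = sigmaGA * (D x : Module.End ℂ GA) * sigmaGA) ∧
  (∀ x y z : ↥(s2Span α),
    (z : Module.End ℂ GA) = sbr (x : Module.End ℂ GA) (y : Module.End ℂ GA) →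
    ((D z : Module.End ℂ GA)) = sbr (D x : Module.End ℂ GA) (y : Module.End ℂ GA)
      + sbr (x : Module.End ℂ GA) (D y : Module.End ℂ GA))

/-- `D` is an odd derivation of `S'(2,α)`: it reverses parity and satisfies the
Leibniz rule `D[x,y] = [Dx,y] + (−1)^{p(x)}[x,Dy]`. -/
def IsOddDer (α : ℂ) (D : ↥(s2Span α) →ₗ[ℂ] ↥(s2Span α)) : Prop :=
  (∀ x z : ↥(s2Span α), (z : Module.End ℂ GA) = sigmaGA * (x : Module.End ℂ GA) * sigmaGA →
    ((D z : Module.End ℂ GA)) = -(sigmaGA * (D x : Module.End ℂ GA) * sigmaGA)) ∧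
  (∀ x y z : ↥(s2Span α),
    (z : Module.End ℂ GA) = sbr (x : Module.End ℂ GA) (y : Module.End ℂ GA) →
    ((D z : Module.End ℂ GA)) = sbr (D x : Module.End ℂ GA) (y : Module.End ℂ GA)
      + sbr (sigmaGA * (x : Module.End ℂ GA) * sigmaGA) (D y : Module.End ℂ GA))

/-- `D` is a superderivation of `S'(2,α)`: a sum of an even and an odd derivation. -/
def IsSuperDer (α : ℂ) (D : ↥(s2Span α) →ₗ[ℂ] ↥(s2Span α)) : Prop :=
  ∃ De Do, D = De + Do ∧ IsEvenDer α De ∧ IsOddDer α Do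

/-- `D` is an inner derivation of `S'(2,α)`: `D = ad s` for some `s ∈ S'(2,α)`. -/
def IsInnerDer (α : ℂ) (D : ↥(s2Span α) →ₗ[ℂ] ↥(s2Span α)) : Prop :=
  ∃ s : ↥(s2Span α), ∀ x : ↥(s2Span α),
    ((D x : Module.End ℂ GA)) = sbr (s : Module.End ℂ GA) (x : Module.End ℂ GA)

/-- Basis symbols of the Lie superalgebra `𝒮` of the classical operators of Kähler
geometry: `Δ, L, H, Λ` (even) and `d, d*, d_c, d_c*` (odd). -/
inductive SB : Type
  | del | lef | car | lam | dif | adj | difc | adjc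
deriving DecidableEq

open SB in
/-- The structure constants of `𝒮`: the only nonzero brackets are
`[L,Λ] = H`, `[H,L] = 2L`, `[H,Λ] = −2Λ`, `[d,d*] = Δ`, `[d_c,d_c*] = Δ`,
`[H,d] = d`, `[H,d*] = −d*`, `[H,d_c] = d_c`, `[H,d_c*] = −d_c*`,
`[L,d*] = −d_c`, `[L,d_c*] = d`, `[Λ,d] = d_c*`, `[Λ,d_c] = −d*`
(odd-odd brackets are anticommutators, `Δ` is central). -/
def brS : SB → SB → (SB →₀ ℂ)
  | lef, lam => Finsupp.single car 1
  | lam, lef => -Finsupp.single car 1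
  | car, lef => (2 : ℂ) • Finsupp.single lef 1
  | lef, car => -((2 : ℂ) • Finsupp.single lef 1)
  | car, lam => -((2 : ℂ) • Finsupp.single lam 1)
  | lam, car => (2 : ℂ) • Finsupp.single lam 1
  | dif, adj => Finsupp.single del 1
  | adj, dif => Finsupp.single del 1
  | difc, adjc => Finsupp.single del 1
  | adjc, difc => Finsupp.single del 1
  | car, dif => Finsupp.single dif 1
  | dif, car => -Finsupp.single dif 1
  | car, adj => -Finsupp.single adj 1
  | adj, car => Finsupp.single adj 1
  | car, difc => Finsupp.single difc 1
  | difc, car => -Finsupp.single difc 1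
  | car, adjc => -Finsupp.single adjc 1
  | adjc, car => Finsupp.single adjc 1
  | lef, adj => -Finsupp.single difc 1
  | adj, lef => Finsupp.single difc 1
  | lef, adjc => Finsupp.single dif 1
  | adjc, lef => -Finsupp.single dif 1
  | lam, dif => Finsupp.single adjc 1
  | dif, lam => -Finsupp.single adjc 1
  | lam, difc => -Finsupp.single adj 1
  | difc, lam => Finsupp.single adj 1
  | _, _ => 0

/-- The bracket of `𝒮`, extended bilinearly from the structure constants. -/
def BrS (x y : SB →₀ ℂ) : SB →₀ ℂ :=
  x.sum fun b cb => y.sum fun b' cb' => (cb * cb') • brS b b'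

open SB in
/-- The map `ψ` on basis symbols: `ψ(Δ) = −ℒ₀ + (1/2)H₀`, `ψ(L) = E₋₁`, `ψ(H) = H₀`,
`ψ(Λ) = F₁`, `ψ(d) = 𝔥₀`, `ψ(d*) = −𝔭₀`, `ψ(d_c) = 𝔵₋₁`, `ψ(d_c*) = 𝔶₁`. -/
def psiS0 : SB → Module.End ℂ GA
  | del => -Lop 0 0 + ((1 : ℂ) / 2) • Hop 0
  | lef => Eop (-1)
  | car => Hop 0
  | lam => Fop 1
  | dif => hop 0 0
  | adj => -pop 0
  | difc => xop (-1)
  | adjc => yop 0 1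

/-- The linear extension `ψ : 𝒮 → S'(2,0)_{deg=0} ⊆ End(A)`. -/
def PsiS (x : SB →₀ ℂ) : Module.End ℂ GA := x.sum fun b c => c • psiS0 b


/-- The degree-zero element `𝐋₀ = −ℒ₀ + (1/2)H₀` of `S'(2,0)`. -/
def L0c : Module.End ℂ GA := -Lop 0 0 + ((1 : ℂ) / 2) • Hop 0

/-!
The operator `𝐋₀ = −ℒ₀ + ½H₀` acts on the given basis of `S'(2,0)` by the integers `deg`, and
eigenspaces for distinct eigenvalues are independent. So the elements of a given degree are exactly
the combinations of the basis elements of that degree, which are eight in number. Since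
`ψ(Δ) = 𝐋₀`, the centrality of `Δ` says precisely that `ψ` lands in degree zero; the other brackets
of `𝒮` are the values at degree zero of bracket formulas valid for all indices. Injectivity can be
read off the action on `t`, `θ₁` and `θ₂`.
-/

section GradedSpan

variable {ι : Type*}

theorem iSup_inf_eq_of_iSupIndep {α : Type*} [CompleteLattice α] [IsModularLattice α]
    {p q : ι → α} (hp : iSupIndep p) (hqp : ∀ i, q i ≤ p i) (i : ι) :
    (⨆ j, q j) ⊓ p i = q i := by
  have hsplit : ⨆ j, q j = q i ⊔ ⨆ (j) (_ : j ≠ i), q j := by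
    refine le_antisymm (iSup_le fun j => ?_)
      (sup_le (le_iSup q i) (iSup₂_le fun j _ => le_iSup q j))
    rcases eq_or_ne j i with rfl | hj
    · exact le_sup_left
    · exact le_sup_of_le_right (le_iSup₂_of_le j hj le_rfl)
  have hdisj : Disjoint (⨆ (j) (_ : j ≠ i), q j) (p i) :=
    ((hp i).mono_right (iSup₂_mono fun j _ => hqp j)).symm
  rw [hsplit, sup_inf_assoc_of_le _ (hqp i), hdisj.eq_bot, sup_bot_eq]

theorem span_iUnion_inf_eigenspace {R M : Type*} [CommRing R] [IsDomain R] [AddCommGroup M]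
    [Module R M] [Module.IsTorsionFree R M] (T : Module.End R M) {μ : ι → R}
    (hμ : Function.Injective μ) {s : ι → Set M}
    (hs : ∀ i, s i ⊆ T.eigenspace (μ i)) (i : ι) :
    Submodule.span R (⋃ j, s j) ⊓ T.eigenspace (μ i) = Submodule.span R (s i) := by
  rw [Submodule.span_iUnion]
  exact iSup_inf_eq_of_iSupIndep (T.eigenspaces_iSupIndep.comp hμ)
    (fun j => Submodule.span_le.2 (hs j)) i

end GradedSpan

/-- The additive monoid underlying the library's additive group structure on `ℤ →₀ ℂ` is not
syntactically its additive monoid structure, which blocks lemmas on negation in `Module.End ℂ GA`;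
this instance restores the syntactic equality. -/
instance : AddCommGroup Lau :=
  { (inferInstance : AddCommMonoid Lau), (inferInstance : AddCommGroup Lau) with }

@[simp] theorem mk4_apply (f₀ f₁ f₂ f₃ : GA →ₗ[ℂ] Lau) (v : GA) :
    mk4 f₀ f₁ f₂ f₃ v = (f₀ v, f₁ v, f₂ v, f₃ v) := rfl

@[simp] theorem pr0_apply (v : GA) : pr0 v = v.1 := rfl

@[simp] theorem pr1_apply (v : GA) : pr1 v = v.2.1 := rfl

@[simp] theorem pr2_apply (v : GA) : pr2 v = v.2.2.1 := rfl

@[simp] theorem pr3_apply (v : GA) : pr3 v = v.2.2.2 := rfl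

@[simp] theorem tshift_apply (n : ℤ) (f : Lau) (k : ℤ) : tshift n f k = f (k - n) := by
  conv_lhs => rw [← sub_add_cancel k n]
  exact Finsupp.mapDomain_apply (add_left_injective n) f (k - n)

@[simp] theorem tder_apply (f : Lau) (k : ℤ) : tder f k = (k + 1) * f (k + 1) := by
  induction f using Finsupp.induction_linear with
  | zero => simp
  | add f g hf hg => simp [hf, hg, mul_add]
  | single n c =>
    rcases eq_or_ne n (k + 1) with rfl | hn
    · simp [tder]
    · simp [tder, Finsupp.single_eq_of_ne' hn,
        Finsupp.single_eq_of_ne' fun h : n - 1 = k => hn (by omega)]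

@[simp] theorem sigmaGA_apply (v : GA) : sigmaGA v = (v.1, -v.2.1, -v.2.2.1, v.2.2.2) := rfl

@[simp] theorem Eop_apply (n : ℤ) (v : GA) : Eop n v = (0, 0, tshift n v.2.1, 0) := by
  simp [Eop, Mt, Mθ2, Dθ1]

@[simp] theorem Hop_apply (n : ℤ) (v : GA) :
    Hop n v = (0, -tshift n v.2.1, tshift n v.2.2.1, 0) := by
  simp [Hop, Mt, Mθ1, Dθ1, Mθ2, Dθ2]

@[simp] theorem Fop_apply (n : ℤ) (v : GA) : Fop n v = (0, tshift n v.2.2.1, 0, 0) := by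
  simp [Fop, Mt, Mθ1, Dθ2]

@[simp] theorem hop_apply (α : ℂ) (n : ℤ) (v : GA) : hop α n v =
    (0, 0, tshift n (tder v.1), -tshift n (tder v.2.1) - (n + α) • tshift (n - 1) v.2.1) := by
  simp [hop, Mt, Dt, Mθ1, Mθ2, Dθ1]

@[simp] theorem pop_apply (n : ℤ) (v : GA) :
    pop n v = (-tshift (n + 1) v.2.2.1, tshift (n + 1) v.2.2.2, 0, 0) := by
  simp [pop, Mt, Dθ2]

@[simp] theorem xop_apply (n : ℤ) (v : GA) :
    xop n v = (tshift (n + 1) v.2.1, 0, tshift (n + 1) v.2.2.2, 0) := by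
  simp [xop, Mt, Dθ1]

@[simp] theorem yop_apply (α : ℂ) (n : ℤ) (v : GA) : yop α n v =
    (0, tshift n (tder v.1), 0, tshift n (tder v.2.2.1) + (n + α) • tshift (n - 1) v.2.2.1) := by
  simp [yop, Mt, Dt, Mθ1, Mθ2, Dθ2]

@[simp] theorem Lop_apply (α : ℂ) (n : ℤ) (v : GA) : Lop α n v =
    (-tshift (n + 1) (tder v.1),
      -(tshift (n + 1) (tder v.2.1) + (((n : ℂ) + α + 1) / 2) • tshift n v.2.1),
      -(tshift (n + 1) (tder v.2.2.1) + (((n : ℂ) + α + 1) / 2) • tshift n v.2.2.1),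
      -(tshift (n + 1) (tder v.2.2.2) + ((n : ℂ) + α + 1) • tshift n v.2.2.2)) := by
  ext <;> simp [Lop, Mt, Dt, Mθ1, Mθ2, Dθ1, Dθ2]; ring

@[simp] theorem L0c_apply (v : GA) : L0c v =
    (tshift 1 (tder v.1), tshift 1 (tder v.2.1), tshift 1 (tder v.2.2.1) + v.2.2.1,
      tshift 1 (tder v.2.2.2) + v.2.2.2) := by
  ext <;> simp [L0c]; ring

/-- An endomorphism of `A` is even if it preserves parity. As the parity involution is its own
inverse, this is commutation with it, written as a conjugation to match `sbr`. -/
def IsEvenOp (x : Module.End ℂ GA) : Prop := sigmaGA * x * sigmaGA = x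

/-- An endomorphism of `A` is odd if it reverses parity; see `IsEvenOp` for the encoding. -/
def IsOddOp (x : Module.End ℂ GA) : Prop := sigmaGA * x * sigmaGA = -x

theorem sbr_apply (x y : Module.End ℂ GA) (v : GA) : sbr x y v = x (y v)
    - (1 / 2 : ℂ) • (y (x v) + sigmaGA (y (sigmaGA (x v))))
    - (1 / 2 : ℂ) • (y (sigmaGA (x (sigmaGA v)))
      - sigmaGA (y (sigmaGA (sigmaGA (x (sigmaGA v)))))) := rfl

/-- The supercommutator as a bilinear map, so that `sbrₗ x` is the adjoint action `ad x`. -/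
def sbrₗ : Module.End ℂ GA →ₗ[ℂ] Module.End ℂ GA →ₗ[ℂ] Module.End ℂ GA :=
  LinearMap.mk₂ ℂ sbr
    (fun x x' y => LinearMap.ext fun v => by
      simp only [sbr_apply, LinearMap.add_apply, map_add]; module)
    (fun c x y => LinearMap.ext fun v => by
      simp only [sbr_apply, LinearMap.smul_apply, map_smul]; module)
    (fun x y y' => LinearMap.ext fun v => by
      simp only [sbr_apply, LinearMap.add_apply, map_add]; module)
    (fun c x y => LinearMap.ext fun v => by
      simp only [sbr_apply, LinearMap.smul_apply, map_smul]; module)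

@[simp] theorem sbrₗ_apply (x y : Module.End ℂ GA) : sbrₗ x y = sbr x y := rfl

theorem sbr_neg_left (x y : Module.End ℂ GA) : sbr (-x) y = -sbr x y := sbrₗ.map_neg₂ x y

theorem sbr_neg_right (x y : Module.End ℂ GA) : sbr x (-y) = -sbr x y := (sbrₗ x).map_neg y

section Supercommutator

variable {x y z : Module.End ℂ GA}

theorem IsOddOp.neg (hx : IsOddOp x) : IsOddOp (-x) :=
  LinearMap.ext fun v => by simpa using congrArg Neg.neg (LinearMap.congr_fun hx v)

theorem sbr_of_even_left (hx : IsEvenOp x) (y : Module.End ℂ GA) : sbr x y = x * y - y * x := by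
  rw [sbr, hx]
  refine LinearMap.ext fun v => ?_
  simp only [LinearMap.sub_apply, LinearMap.smul_apply, LinearMap.add_apply, Module.End.mul_apply]
  module

theorem sbr_of_even_right (x : Module.End ℂ GA) (hy : IsEvenOp y) : sbr x y = x * y - y * x := by
  rw [sbr, hy]
  refine LinearMap.ext fun v => ?_
  simp only [LinearMap.sub_apply, LinearMap.smul_apply, LinearMap.add_apply, Module.End.mul_apply]
  module

theorem sbr_of_odd (hx : IsOddOp x) (hy : IsOddOp y) : sbr x y = x * y + y * x := by
  rw [sbr, hx, hy]
  refine LinearMap.ext fun v => ?_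
  simp only [LinearMap.sub_apply, LinearMap.smul_apply, LinearMap.add_apply, Module.End.mul_apply,
    LinearMap.neg_apply, map_neg]
  module

theorem sbr_swap_of_even_left (hx : IsEvenOp x) (y : Module.End ℂ GA) : sbr y x = -sbr x y := by
  rw [sbr_of_even_left hx, sbr_of_even_right y hx, neg_sub]

theorem sbr_swap_of_odd (hx : IsOddOp x) (hy : IsOddOp y) : sbr y x = sbr x y := by
  rw [sbr_of_odd hx hy, sbr_of_odd hy hx, add_comm]

theorem sbr_self_of_even (hx : IsEvenOp x) : sbr x x = 0 := by
  rw [sbr_of_even_left hx, sub_self]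

theorem sbr_eq_of_even_left (hx : IsEvenOp x) (h : ∀ v, x (y v) - y (x v) = z v) : sbr x y = z :=
  (sbr_of_even_left hx y).trans (LinearMap.ext h)

theorem sbr_eq_of_odd (hx : IsOddOp x) (hy : IsOddOp y) (h : ∀ v, x (y v) + y (x v) = z v) :
    sbr x y = z :=
  (sbr_of_odd hx hy).trans (LinearMap.ext h)

end Supercommutator

section Brackets

variable (α β : ℂ) (m n : ℤ)

theorem isEvenOp_L0c : IsEvenOp L0c := LinearMap.ext fun v => by ext <;> simp; ring

theorem isEvenOp_Eop : IsEvenOp (Eop n) := LinearMap.ext fun v => by simp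

theorem isEvenOp_Hop : IsEvenOp (Hop n) := LinearMap.ext fun v => by simp

theorem isEvenOp_Fop : IsEvenOp (Fop n) := LinearMap.ext fun v => by simp

theorem isOddOp_hop : IsOddOp (hop α n) := LinearMap.ext fun v => by ext <;> simp; ring

theorem isOddOp_pop : IsOddOp (pop n) := LinearMap.ext fun v => by simp

theorem isOddOp_xop : IsOddOp (xop n) := LinearMap.ext fun v => by simp

theorem isOddOp_yop : IsOddOp (yop α n) := LinearMap.ext fun v => by ext <;> simp; ring

theorem sbr_Eop_Fop : sbr (Eop m) (Fop n) = Hop (m + n) :=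
  sbr_eq_of_even_left (isEvenOp_Eop m) fun v => by ext <;> simp <;> ring_nf

theorem sbr_Hop_Eop : sbr (Hop m) (Eop n) = (2 : ℂ) • Eop (m + n) :=
  sbr_eq_of_even_left (isEvenOp_Hop m) fun v => by ext <;> simp; ring_nf

theorem sbr_Hop_Fop : sbr (Hop m) (Fop n) = -((2 : ℂ) • Fop (m + n)) :=
  sbr_eq_of_even_left (isEvenOp_Hop m) fun v => by ext <;> simp; ring_nf

theorem sbr_Hop_hop : sbr (Hop m) (hop α n) = hop α (m + n) :=
  sbr_eq_of_even_left (isEvenOp_Hop m) fun v => by ext <;> simp <;> ring_nf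

theorem sbr_Hop_pop : sbr (Hop m) (pop n) = -pop (m + n) :=
  sbr_eq_of_even_left (isEvenOp_Hop m) fun v => by ext <;> simp <;> ring_nf

theorem sbr_Hop_xop : sbr (Hop m) (xop n) = xop (m + n) :=
  sbr_eq_of_even_left (isEvenOp_Hop m) fun v => by ext <;> simp <;> ring_nf

theorem sbr_Hop_yop : sbr (Hop m) (yop α n) = -yop α (m + n) :=
  sbr_eq_of_even_left (isEvenOp_Hop m) fun v => by ext <;> simp <;> ring_nf

theorem sbr_Eop_hop : sbr (Eop m) (hop α n) = 0 :=
  sbr_eq_of_even_left (isEvenOp_Eop m) fun v => by ext <;> simp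

theorem sbr_Eop_pop : sbr (Eop m) (pop n) = xop (m + n) :=
  sbr_eq_of_even_left (isEvenOp_Eop m) fun v => by ext <;> simp <;> ring_nf

theorem sbr_Eop_xop : sbr (Eop m) (xop n) = 0 :=
  sbr_eq_of_even_left (isEvenOp_Eop m) fun v => by ext <;> simp

theorem sbr_Eop_yop : sbr (Eop m) (yop α n) = hop α (m + n) :=
  sbr_eq_of_even_left (isEvenOp_Eop m) fun v => by ext <;> simp <;> ring_nf

theorem sbr_Fop_hop : sbr (Fop m) (hop α n) = yop α (m + n) :=
  sbr_eq_of_even_left (isEvenOp_Fop m) fun v => by ext <;> simp <;> ring_nf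

theorem sbr_Fop_pop : sbr (Fop m) (pop n) = 0 :=
  sbr_eq_of_even_left (isEvenOp_Fop m) fun v => by ext <;> simp

theorem sbr_Fop_xop : sbr (Fop m) (xop n) = pop (m + n) :=
  sbr_eq_of_even_left (isEvenOp_Fop m) fun v => by ext <;> simp <;> ring_nf

theorem sbr_Fop_yop : sbr (Fop m) (yop α n) = 0 :=
  sbr_eq_of_even_left (isEvenOp_Fop m) fun v => by ext <;> simp

theorem sbr_hop_hop : sbr (hop α m) (hop β n) = 0 :=
  sbr_eq_of_odd (isOddOp_hop α m) (isOddOp_hop β n) fun v => by ext <;> simp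

theorem sbr_hop_pop : sbr (hop α m) (pop n) =
    Lop α (m + n) + ((m - n + α - 1) / 2 : ℂ) • Hop (m + n) :=
  sbr_eq_of_odd (isOddOp_hop α m) (isOddOp_pop n) fun v => by ext <;> simp <;> ring_nf

theorem sbr_hop_xop : sbr (hop α m) (xop n) = (n + 1 - m - α : ℂ) • Eop (m + n) :=
  sbr_eq_of_odd (isOddOp_hop α m) (isOddOp_xop n) fun v => by ext <;> simp; ring_nf

theorem sbr_hop_yop : sbr (hop α m) (yop α n) = 0 :=
  sbr_eq_of_odd (isOddOp_hop α m) (isOddOp_yop α n) fun v => by ext <;> simp; ring_nf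

theorem sbr_pop_pop : sbr (pop m) (pop n) = 0 :=
  sbr_eq_of_odd (isOddOp_pop m) (isOddOp_pop n) fun v => by ext <;> simp

theorem sbr_pop_xop : sbr (pop m) (xop n) = 0 :=
  sbr_eq_of_odd (isOddOp_pop m) (isOddOp_xop n) fun v => by ext <;> simp; ring_nf

theorem sbr_yop_pop : sbr (yop α m) (pop n) = (m + α - n - 1 : ℂ) • Fop (m + n) :=
  sbr_eq_of_odd (isOddOp_yop α m) (isOddOp_pop n) fun v => by ext <;> simp; ring_nf

theorem sbr_xop_xop : sbr (xop m) (xop n) = 0 :=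
  sbr_eq_of_odd (isOddOp_xop m) (isOddOp_xop n) fun v => by ext <;> simp

theorem sbr_xop_yop : sbr (xop m) (yop α n) =
    -Lop α (m + n) + ((n - m + α - 1) / 2 : ℂ) • Hop (m + n) :=
  sbr_eq_of_odd (isOddOp_xop m) (isOddOp_yop α n) fun v => by ext <;> simp <;> ring_nf

theorem sbr_yop_yop : sbr (yop α m) (yop β n) = 0 :=
  sbr_eq_of_odd (isOddOp_yop α m) (isOddOp_yop β n) fun v => by ext <;> simp

theorem sbr_L0c_Lop : sbr L0c (Lop α n) = (n : ℂ) • Lop α n :=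
  sbr_eq_of_even_left isEvenOp_L0c fun v => by ext <;> simp <;> ring_nf

theorem sbr_L0c_Eop : sbr L0c (Eop n) = (n + 1 : ℂ) • Eop n :=
  sbr_eq_of_even_left isEvenOp_L0c fun v => by ext <;> simp; ring_nf

theorem sbr_L0c_Hop : sbr L0c (Hop n) = (n : ℂ) • Hop n :=
  sbr_eq_of_even_left isEvenOp_L0c fun v => by ext <;> simp <;> ring_nf

theorem sbr_L0c_Fop : sbr L0c (Fop n) = (n - 1 : ℂ) • Fop n :=
  sbr_eq_of_even_left isEvenOp_L0c fun v => by ext <;> simp; ring_nf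

theorem sbr_L0c_hop : sbr L0c (hop α n) = (n : ℂ) • hop α n :=
  sbr_eq_of_even_left isEvenOp_L0c fun v => by ext <;> simp <;> ring_nf

theorem sbr_L0c_pop : sbr L0c (pop n) = (n : ℂ) • pop n :=
  sbr_eq_of_even_left isEvenOp_L0c fun v => by ext <;> simp <;> ring_nf

theorem sbr_L0c_xop : sbr L0c (xop n) = (n + 1 : ℂ) • xop n :=
  sbr_eq_of_even_left isEvenOp_L0c fun v => by ext <;> simp <;> ring_nf

theorem sbr_L0c_yop : sbr L0c (yop α n) = (n - 1 : ℂ) • yop α n :=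
  sbr_eq_of_even_left isEvenOp_L0c fun v => by ext <;> simp <;> ring_nf

end Brackets

/-- The endomorphisms of `A` of degree `k`: the eigenspace of `ad 𝐋₀` for the eigenvalue `k`. Its
intersection with `S'(2,α)` is the degree-`k` part of that superalgebra. -/
def degreeSpace (k : ℤ) : Submodule ℂ (Module.End ℂ GA) :=
  Module.End.eigenspace (sbrₗ L0c) (k : ℂ)

theorem mem_degreeSpace {x : Module.End ℂ GA} {k : ℤ} :
    x ∈ degreeSpace k ↔ sbr L0c x = (k : ℂ) • x := Module.End.mem_eigenspace_iff

/-- The basis elements of `S'(2,α)` of degree `k`. The shifts come from `deg E_n = deg 𝔵_n = n + 1`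
and `deg F_n = deg 𝔶_n = n − 1`. -/
def genOfDegree (α : ℂ) (k : ℤ) : Set (Module.End ℂ GA) :=
  {Lop α k, Eop (k - 1), Hop k, Fop (k + 1), hop α k, pop k, xop (k - 1), yop α (k + 1)}

theorem iUnion_genOfDegree (α : ℂ) : ⋃ k, genOfDegree α k = s2Gen α := by
  ext e
  have hsub (p : ℤ → Prop) : (∃ k, p (k - 1)) ↔ ∃ n, p n :=
    (Equiv.subRight 1).surjective.exists.symm
  have hadd (p : ℤ → Prop) : (∃ k, p (k + 1)) ↔ ∃ n, p n :=
    (Equiv.addRight 1).surjective.exists.symm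
  simp only [genOfDegree, s2Gen, Set.mem_iUnion, Set.mem_insert_iff, Set.mem_singleton_iff,
    Set.mem_ofPred_eq, exists_or, hsub (e = Eop ·), hadd (e = Fop ·), hsub (e = xop ·),
    hadd (e = yop α ·)]

theorem genOfDegree_subset_degreeSpace (α : ℂ) (k : ℤ) :
    genOfDegree α k ⊆ degreeSpace k := by
  simp [genOfDegree, Set.insert_subset_iff, mem_degreeSpace, sbr_L0c_Lop, sbr_L0c_Eop,
    sbr_L0c_Hop, sbr_L0c_Fop, sbr_L0c_hop, sbr_L0c_pop, sbr_L0c_xop, sbr_L0c_yop]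

theorem s2Span_inf_degreeSpace (α : ℂ) (k : ℤ) :
    s2Span α ⊓ degreeSpace k = Submodule.span ℂ (genOfDegree α k) := by
  rw [s2Span, ← iUnion_genOfDegree]
  exact span_iUnion_inf_eigenspace (sbrₗ L0c) Int.cast_injective
    (genOfDegree_subset_degreeSpace α) k

theorem mem_degreeSpace_zero {x : Module.End ℂ GA} : x ∈ degreeSpace 0 ↔ sbr L0c x = 0 := by
  rw [mem_degreeSpace, Int.cast_zero, zero_smul]

section KahlerOperators

open SB

/-- The parity on the basis symbols of `𝒮`: `d, d*, d_c, d_c*` are odd, the others even. -/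
def SB.IsOdd (b : SB) : Prop := b = dif ∨ b = adj ∨ b = difc ∨ b = adjc

theorem isEvenOp_psiS0 {b : SB} (hb : ¬b.IsOdd) : IsEvenOp (psiS0 b) := by
  cases b
  case del => exact isEvenOp_L0c
  case lef => exact isEvenOp_Eop (-1)
  case car => exact isEvenOp_Hop 0
  case lam => exact isEvenOp_Fop 1
  all_goals simp [SB.IsOdd] at hb

theorem isOddOp_psiS0 {b : SB} (hb : b.IsOdd) : IsOddOp (psiS0 b) := by
  obtain rfl | rfl | rfl | rfl := hb
  · exact isOddOp_hop 0 0
  · exact (isOddOp_pop 0).neg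
  · exact isOddOp_xop (-1)
  · exact isOddOp_yop 0 1

theorem brS_swap_of_even {b : SB} (hb : ¬b.IsOdd) (c : SB) : brS c b = -brS b c := by
  cases b <;> cases c <;> simp_all [brS, SB.IsOdd]

theorem brS_swap_of_odd {b c : SB} (hb : b.IsOdd) (hc : c.IsOdd) : brS c b = brS b c := by
  cases b <;> cases c <;> simp_all [brS, SB.IsOdd]

theorem PsiS_eq_linearCombination : PsiS = Finsupp.linearCombination ℂ psiS0 := rfl

theorem PsiS_single (b : SB) (c : ℂ) : PsiS (Finsupp.single b c) = c • psiS0 b :=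
  Finsupp.linearCombination_single ..

theorem PsiS_neg (x : SB →₀ ℂ) : PsiS (-x) = -PsiS x :=
  map_neg (Finsupp.linearCombination ℂ psiS0) x

theorem PsiS_zero : PsiS 0 = 0 := map_zero (Finsupp.linearCombination ℂ psiS0)

theorem PsiS_brS_symm {b c : SB} (h : PsiS (brS b c) = sbr (psiS0 b) (psiS0 c)) :
    PsiS (brS c b) = sbr (psiS0 c) (psiS0 b) := by
  by_cases hb : b.IsOdd
  · by_cases hc : c.IsOdd
    · rw [brS_swap_of_odd hb hc, h, sbr_swap_of_odd (isOddOp_psiS0 hb) (isOddOp_psiS0 hc)]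
    · rw [← neg_inj, ← PsiS_neg, ← brS_swap_of_even hc, h,
        sbr_swap_of_even_left (isEvenOp_psiS0 hc)]
  · rw [brS_swap_of_even hb, sbr_swap_of_even_left (isEvenOp_psiS0 hb), ← h, PsiS_neg]

theorem genOfDegree_zero_zero : genOfDegree 0 0 =
    {Lop 0 0, Eop (-1), Hop 0, Fop 1, hop 0 0, pop 0, xop (-1), yop 0 1} := by
  simp only [genOfDegree, zero_sub, zero_add]

theorem psiS0_mem_span (b : SB) : psiS0 b ∈ Submodule.span ℂ (genOfDegree 0 0) := by
  have hgen : genOfDegree 0 0 ⊆ Submodule.span ℂ (genOfDegree 0 0) := Submodule.subset_span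
  rw [genOfDegree_zero_zero] at hgen ⊢
  simp only [Set.insert_subset_iff, Set.singleton_subset_iff, SetLike.mem_coe] at hgen
  obtain ⟨hL, hE, hH, hF, hh, hp, hx, hy⟩ := hgen
  cases b
  exacts [add_mem (neg_mem hL) (Submodule.smul_mem _ _ hH), hE, hH, hF, hh, neg_mem hp, hx, hy]

theorem genOfDegree_zero_zero_subset_span :
    genOfDegree 0 0 ⊆ Submodule.span ℂ (Set.range psiS0) := by
  have hpsi (b : SB) : psiS0 b ∈ Submodule.span ℂ (Set.range psiS0) :=
    Submodule.subset_span (Set.mem_range_self b)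
  have hL : Lop 0 0 = (1 / 2 : ℂ) • psiS0 car - psiS0 del := by simp only [psiS0]; module
  have hp : pop 0 = -psiS0 adj := (neg_neg _).symm
  simp only [genOfDegree, Set.insert_subset_iff, Set.singleton_subset_iff, SetLike.mem_coe]
  refine ⟨hL ▸ sub_mem (Submodule.smul_mem _ _ (hpsi car)) (hpsi del), hpsi lef, hpsi car, hpsi lam,
    hpsi dif, hp ▸ neg_mem (hpsi adj), hpsi difc, hpsi adjc⟩

theorem span_range_psiS0 :
    Submodule.span ℂ (Set.range psiS0) = Submodule.span ℂ (genOfDegree 0 0) :=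
  le_antisymm (Submodule.span_le.2 (Set.range_subset_iff.2 psiS0_mem_span))
    (Submodule.span_le.2 genOfDegree_zero_zero_subset_span)

theorem PsiS_brS_del (c : SB) : PsiS (brS del c) = sbr (psiS0 del) (psiS0 c) := by
  have hmem : psiS0 c ∈ degreeSpace 0 := (s2Span_inf_degreeSpace 0 0).ge.trans inf_le_right <|
    span_range_psiS0.le <| Submodule.subset_span <| Set.mem_range_self c
  have hbr : brS del c = 0 := by cases c <;> rfl
  rw [hbr, PsiS_zero]
  exact (mem_degreeSpace_zero.1 hmem).symm

theorem PsiS_brS_car (c : SB) : PsiS (brS car c) = sbr (psiS0 car) (psiS0 c) := by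
  cases c
  case del => exact PsiS_brS_symm (PsiS_brS_del car)
  all_goals simp [brS, psiS0, PsiS_zero, PsiS_neg, PsiS_single, sbr_neg_right,
    sbr_self_of_even (isEvenOp_Hop 0), sbr_Hop_Eop, sbr_Hop_Fop, sbr_Hop_hop, sbr_Hop_pop,
    sbr_Hop_xop, sbr_Hop_yop]

theorem PsiS_brS_lef (c : SB) : PsiS (brS lef c) = sbr (psiS0 lef) (psiS0 c) := by
  cases c
  case del => exact PsiS_brS_symm (PsiS_brS_del lef)
  case car => exact PsiS_brS_symm (PsiS_brS_car lef)
  all_goals simp [brS, psiS0, PsiS_zero, PsiS_neg, PsiS_single, sbr_neg_right,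
    sbr_self_of_even (isEvenOp_Eop (-1)), sbr_Eop_Fop, sbr_Eop_hop, sbr_Eop_pop,
    sbr_Eop_xop, sbr_Eop_yop]

theorem PsiS_brS_lam (c : SB) : PsiS (brS lam c) = sbr (psiS0 lam) (psiS0 c) := by
  cases c
  case del => exact PsiS_brS_symm (PsiS_brS_del lam)
  case car => exact PsiS_brS_symm (PsiS_brS_car lam)
  case lef => exact PsiS_brS_symm (PsiS_brS_lef lam)
  all_goals simp [brS, psiS0, PsiS_zero, PsiS_neg, PsiS_single, sbr_neg_right,
    sbr_self_of_even (isEvenOp_Fop 1), sbr_Fop_hop, sbr_Fop_pop, sbr_Fop_xop, sbr_Fop_yop]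

theorem PsiS_brS_of_even_left {b : SB} (hb : ¬b.IsOdd) (c : SB) :
    PsiS (brS b c) = sbr (psiS0 b) (psiS0 c) := by
  cases b
  case del => exact PsiS_brS_del c
  case lef => exact PsiS_brS_lef c
  case car => exact PsiS_brS_car c
  case lam => exact PsiS_brS_lam c
  all_goals simp [SB.IsOdd] at hb

theorem PsiS_brS_dif {c : SB} (hc : c.IsOdd) : PsiS (brS dif c) = sbr (psiS0 dif) (psiS0 c) := by
  obtain rfl | rfl | rfl | rfl := hc
  · simp [brS, psiS0, PsiS_zero, sbr_hop_hop]
  · have hbr : sbr (hop 0 0) (pop 0) = Lop 0 0 - (1 / 2 : ℂ) • Hop 0 := by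
      rw [sbr_hop_pop, add_zero]
      module
    simp only [brS, psiS0, PsiS_single, sbr_neg_right, hbr]
    module
  · simp [brS, psiS0, PsiS_zero, sbr_hop_xop]
  · simp [brS, psiS0, PsiS_zero, sbr_hop_yop]

theorem PsiS_brS_adj {c : SB} (hc : c.IsOdd) : PsiS (brS adj c) = sbr (psiS0 adj) (psiS0 c) := by
  obtain rfl | rfl | rfl | rfl := hc
  · exact PsiS_brS_symm (PsiS_brS_dif (by simp [SB.IsOdd]))
  · simp [brS, psiS0, PsiS_zero, sbr_neg_left, sbr_neg_right, sbr_pop_pop]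
  · simp [brS, psiS0, PsiS_zero, sbr_neg_left, sbr_pop_xop]
  · refine PsiS_brS_symm ?_
    simp [brS, psiS0, PsiS_zero, sbr_neg_right, sbr_yop_pop]

theorem PsiS_brS_difc {c : SB} (hc : c.IsOdd) :
    PsiS (brS difc c) = sbr (psiS0 difc) (psiS0 c) := by
  obtain rfl | rfl | rfl | rfl := hc
  · exact PsiS_brS_symm (PsiS_brS_dif (by simp [SB.IsOdd]))
  · exact PsiS_brS_symm (PsiS_brS_adj (by simp [SB.IsOdd]))
  · simp [brS, psiS0, PsiS_zero, sbr_xop_xop]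
  · simp [brS, psiS0, PsiS_single, sbr_xop_yop]

theorem PsiS_brS_adjc {c : SB} (hc : c.IsOdd) :
    PsiS (brS adjc c) = sbr (psiS0 adjc) (psiS0 c) := by
  obtain rfl | rfl | rfl | rfl := hc
  · exact PsiS_brS_symm (PsiS_brS_dif (by simp [SB.IsOdd]))
  · exact PsiS_brS_symm (PsiS_brS_adj (by simp [SB.IsOdd]))
  · exact PsiS_brS_symm (PsiS_brS_difc (by simp [SB.IsOdd]))
  · simp [brS, psiS0, PsiS_zero, sbr_yop_yop]

theorem PsiS_brS_of_odd {b c : SB} (hb : b.IsOdd) (hc : c.IsOdd) :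
    PsiS (brS b c) = sbr (psiS0 b) (psiS0 c) := by
  obtain rfl | rfl | rfl | rfl := hb
  exacts [PsiS_brS_dif hc, PsiS_brS_adj hc, PsiS_brS_difc hc, PsiS_brS_adjc hc]

theorem PsiS_brS (b c : SB) : PsiS (brS b c) = sbr (psiS0 b) (psiS0 c) := by
  by_cases hb : b.IsOdd
  · by_cases hc : c.IsOdd
    · exact PsiS_brS_of_odd hb hc
    · exact PsiS_brS_symm (PsiS_brS_of_even_left hc b)
  · exact PsiS_brS_of_even_left hb c

theorem PsiS_BrS (x y : SB →₀ ℂ) : PsiS (BrS x y) = sbr (PsiS x) (PsiS y) := by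
  have hleft : PsiS (BrS x y) = x.sum fun b r => y.sum fun c s => (r * s) • PsiS (brS b c) := by
    simp only [BrS, PsiS_eq_linearCombination, map_finsuppSum, map_smul]
  have hright : sbr (PsiS x) (PsiS y) =
      x.sum fun b r => y.sum fun c s => (r * s) • sbr (psiS0 b) (psiS0 c) := by
    simp only [← sbrₗ_apply, PsiS, Finsupp.sum, map_sum, LinearMap.sum_apply, map_smul,
      LinearMap.smul_apply, smul_smul, Finset.smul_sum]
    exact Finset.sum_comm.trans (by simp only [mul_comm])
  simp only [hleft, hright, PsiS_brS]

theorem linearIndependent_psiS0 : LinearIndependent ℂ psiS0 := by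
  -- `entry v π k` reads the coefficient of `t^k` in the component `π` of the image of `v`; the
  -- functional `f b` is such an entry, up to sign, at which only `psiS0 b` is nonzero.
  let entry (v : GA) (π : GA →ₗ[ℂ] Lau) (k : ℤ) : Module.Dual ℂ (Module.End ℂ GA) :=
    Finsupp.lapply k ∘ₗ π ∘ₗ LinearMap.applyₗ v
  let t : GA := (Finsupp.single 1 1, 0, 0, 0)
  let θ₁ : GA := (0, Finsupp.single 0 1, 0, 0)
  let θ₂ : GA := (0, 0, Finsupp.single 0 1, 0)
  let f : SB → Module.Dual ℂ (Module.End ℂ GA)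
    | del => entry t pr0 1
    | lef => entry θ₁ pr2 (-1)
    | car => -entry θ₁ pr1 0
    | lam => entry θ₂ pr1 1
    | dif => entry t pr2 0
    | adj => entry θ₂ pr0 1
    | difc => entry θ₁ pr0 0
    | adjc => entry t pr1 1
  refine .of_pairwise_dual_eq_zero_one psiS0 f (fun b c hbc => ?_) fun b => ?_
  · cases b <;> cases c <;> first | exact absurd rfl hbc | simp [f, entry, t, θ₁, θ₂, psiS0]
  · cases b <;> simp [f, entry, t, θ₁, θ₂, psiS0]

theorem range_PsiS : Set.range PsiS = Submodule.span ℂ (genOfDegree 0 0) := by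
  rw [← span_range_psiS0, ← Finsupp.range_linearCombination]
  rfl

end KahlerOperators

/-- The degree-zero part of `S'(2,0)` with respect to the grading
`deg` (the eigenvalue grading of `ad(−ℒ₀ + (1/2)H₀)`) is spanned by
`ℒ₀, E₋₁, H₀, F₁, 𝔥₀, 𝔭₀, 𝔵₋₁, 𝔶₁`, and `ψ` is an isomorphism of Lie superalgebras
from the algebra `𝒮` of classical Kähler operators onto `S'(2,0)_{deg=0}`. -/
theorem classical_kahler_operators_iso_degree_zero_part :
    -- the degree-zero part of `S'(2,0)` is spanned by the eight listed elements
    (Submodule.span ℂ ({Lop 0 0, Eop (-1), Hop 0, Fop 1, hop 0 0, pop 0,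
        xop (-1), yop 0 1} : Set (Module.End ℂ GA)) : Set (Module.End ℂ GA))
      = {x : Module.End ℂ GA | x ∈ s2Span 0 ∧ sbr L0c x = 0} ∧
    -- `ψ` is injective,
    Function.Injective PsiS ∧
    -- a homomorphism of Lie superalgebras,
    (∀ x y : SB →₀ ℂ, PsiS (BrS x y) = sbr (PsiS x) (PsiS y)) ∧
    -- and surjective onto the degree-zero part
    Set.range PsiS = (Submodule.span ℂ ({Lop 0 0, Eop (-1), Hop 0, Fop 1, hop 0 0,
        pop 0, xop (-1), yop 0 1} : Set (Module.End ℂ GA)) : Submodule ℂ (Module.End ℂ GA)) := by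
  have hdeg := s2Span_inf_degreeSpace 0 0
  rw [← genOfDegree_zero_zero]
  refine ⟨?_, linearIndependent_psiS0, PsiS_BrS, range_PsiS⟩
  rw [← hdeg]
  exact Set.ext fun x => and_congr_right fun _ => mem_degreeSpace_zero
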